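/- Let d < e < f be integers with d + e + f = 0, and assume e ≥ j. Suppose val(β) = d, val(γ) > d, k > d, j + k > d + e, val(β·ε^j − α·γ) = d + e, val(ε^i·γ) > d + e, and val(ε^k·α) > d + e. Then val(a·c) ≥ d − k; and if moreover e > j, then val(a·c) = d − k. -/

import Mathlib

noncomputable section

/-- The ε-adic valuation on `L = k̄((ε))`, with `val 0 = ∞`. -/
def val {K : Type*} [Field K] (x : LaurentSeries K) : WithTop ℤ := x.orderTop

/-- The uniformizer ε of the Laurent series field. -/
def eps (K : Type*) [Field K] : LaurentSeries K := HahnSeries.single 1 1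

/-- `σ : L → L` is the Frobenius automorphism: it fixes ε and raises each Laurent-series
coefficient to the `q`-th power.  (This property determines `σ` uniquely.) -/
def IsFrobenius (K : Type*) [Field K] (q : ℕ)
    (σ : LaurentSeries K → LaurentSeries K) : Prop :=
  ∀ (x : LaurentSeries K) (n : ℤ), (σ x).coeff n = (x.coeff n) ^ q

theorem val_mul_aux {K : Type*} [Field K] (x y : LaurentSeries K) :
    val (x * y) = val x + val y := HahnSeries.orderTop_mul x y

theorem val_eps_zpow {K : Type*} [Field K] (n : ℤ) : val (eps K ^ n) = (n : WithTop ℤ) := by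
  have h : eps K ^ n = HahnSeries.single n 1 := (RatFunc.single_zpow n).symm
  rw [h, val, HahnSeries.orderTop_single one_ne_zero]

theorem val_frob {K : Type*} [Field K] (q : ℕ) (hq : q ≠ 0)
    (σ : LaurentSeries K → LaurentSeries K) (hσ : IsFrobenius K q σ) (x : LaurentSeries K) :
    val (σ x) = val x := by
  have hz : ∀ n, (σ x).coeff n = 0 ↔ x.coeff n = 0 := fun n => by
    rw [hσ x n, pow_eq_zero_iff hq]
  unfold val
  refine eq_of_forall_le_iff fun m => ?_
  simp only [HahnSeries.le_orderTop_iff_forall, hz]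

theorem val_sub_left {K : Type*} [Field K] (x y : LaurentSeries K) (h : val x < val y) :
    val (x - y) = val x := HahnSeries.orderTop_sub h

theorem val_sub_right {K : Type*} [Field K] (x y : LaurentSeries K) (h : val y < val x) :
    val (x - y) = val y := by
  have h2 := val_sub_left y x h
  rw [← h2, ← neg_sub y x]
  exact HahnSeries.orderTop_neg

theorem val_twist {K : Type*} [Field K] (q : ℕ) (hq : q ≠ 0)
    (σ : LaurentSeries K → LaurentSeries K) (hσ : IsFrobenius K q σ) (x : LaurentSeries K)
    (m n : ℤ) (hmn : n < m) :
    val (eps K ^ m * σ x - eps K ^ n * x) = n + val x := by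
  have h1 : val (eps K ^ m * σ x) = m + val x := by
    rw [val_mul_aux, val_eps_zpow, val_frob q hq σ hσ]
  have h2 : val (eps K ^ n * x) = n + val x := by
    rw [val_mul_aux, val_eps_zpow]
  by_cases hx : x = 0
  · have h3 : val x = ⊤ := by simp [val, hx]
    have h4 : eps K ^ m * σ x = 0 := by
      rw [h3] at h1
      simpa [val] using h1
    rw [h4, hx]
    simp [val]
  · rw [val_sub_right _ _ ?_, h2]
    rw [h1, h2]
    have h3 : val x ≠ ⊤ := by simpa [val] using hx
    lift val x to ℤ using h3 with v
    norm_cast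
    omega

/-- the case `x = ε^{(d,e,f)}s_1s_2s_1` with `d < e < f`, `e ≥ j`: under
the stated valuation conditions, `val(ac) ≥ d − k`; and if moreover `e > j`, then
`val(ac) = d − k`. -/
theorem case_f_max_d_min_val_ac (F : Type*) [Field F] [Fintype F]
    (σ : LaurentSeries (AlgebraicClosure F) → LaurentSeries (AlgebraicClosure F))
    (hσ : IsFrobenius (AlgebraicClosure F) (Fintype.card F) σ)
    (a b c : LaurentSeries (AlgebraicClosure F))
    (i j k : ℤ) (hij : j < i) (hjk : k < j) (hijk : i + j + k = 0)
    (d e f : ℤ) (hde : d < e) (hef : e < f) (hdef : d + e + f = 0)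
    (hej : j ≤ e)
    (α β γ : LaurentSeries (AlgebraicClosure F))
    (hα : α = eps (AlgebraicClosure F) ^ i * σ a - eps (AlgebraicClosure F) ^ j * a)
    (hβ : β = eps (AlgebraicClosure F) ^ i * σ b - eps (AlgebraicClosure F) ^ k * b -
      a * (eps (AlgebraicClosure F) ^ j * σ c - eps (AlgebraicClosure F) ^ k * c))
    (hγ : γ = eps (AlgebraicClosure F) ^ j * σ c - eps (AlgebraicClosure F) ^ k * c)
    (hvβ : val β = (d : WithTop ℤ))
    (hvγ : (d : WithTop ℤ) < val γ)
    (hkd : d < k)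
    (hjkde : d + e < j + k)
    (hminor : val (β * eps (AlgebraicClosure F) ^ j - α * γ) = ((d + e : ℤ) : WithTop ℤ))
    (hvγ2 : ((d + e : ℤ) : WithTop ℤ) < val (eps (AlgebraicClosure F) ^ i * γ))
    (hvα : ((d + e : ℤ) : WithTop ℤ) < val (eps (AlgebraicClosure F) ^ k * α)) :
    ((d - k : ℤ) : WithTop ℤ) ≤ val (a * c) ∧
    (j < e → val (a * c) = ((d - k : ℤ) : WithTop ℤ)) := by
  have hq : Fintype.card F ≠ 0 := Fintype.card_ne_zero
  have hA := val_twist _ hq σ hσ a i j hij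
  have hC := val_twist _ hq σ hσ c j k hjk
  rw [← hα] at hA
  rw [← hγ] at hC
  have hP : val (α * γ) = ((j + k : ℤ) : WithTop ℤ) + val (a * c) := by
    rw [val_mul_aux, val_mul_aux, hA, hC, WithTop.coe_add]
    abel
  have hB : val (β * eps (AlgebraicClosure F) ^ j) = ((d + j : ℤ) : WithTop ℤ) := by
    rw [val_mul_aux, hvβ, val_eps_zpow, WithTop.coe_add]
  have hl := val_sub_left (β * eps (AlgebraicClosure F) ^ j) (α * γ)
  have hr := val_sub_right (β * eps (AlgebraicClosure F) ^ j) (α * γ)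
  rw [hminor, hB, hP] at hl hr
  generalize val (a * c) = v at hl hr ⊢
  induction v using WithTop.recTopCoe with
  | top =>
    refine ⟨le_top, fun hje => ?_⟩
    have := hl (by rw [WithTop.add_top]; exact WithTop.coe_lt_top _)
    norm_cast at this
    omega
  | coe v =>
    norm_cast at hl hr ⊢
    omega
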